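/- Let Δ be a simplicial complex over a field k with depth k[Δ] = ℓ, and suppose H̃_{ℓ−1}(Δ; k) = 0. Choose T ∈ Δ of minimal cardinality such that H̃_{ℓ−|T|−1}(lk_Δ(T); k) ≠ 0. Let J ⊆ V(Δ) be an independent set and suppose T = T′ ∪ {b} with b ∈ J. Then, setting Δ̃ = ast_Δ(J), one has H̃_{ℓ−|T′|−2}(lk_Δ̃(T′); k) ≠ 0; in particular, depth k[Δ̃] = ℓ − 1. -/

import Mathlib

open Finset

/-- An abstract simplicial complex on vertex type `V`, given by a finite, downward closed
family of finite subsets of `V` (its faces). -/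
structure SComplex (V : Type) [DecidableEq V] where
  faces : Finset (Finset V)
  down_closed : ∀ ⦃s t : Finset V⦄, s ∈ faces → t ⊆ s → t ∈ faces

namespace SComplex

variable {V : Type} [DecidableEq V]

/-- `K.rank = d = dim k[Δ] = dim Δ + 1` is the maximal cardinality of a face of `K`. -/
def rank (K : SComplex V) : ℕ := K.faces.sup Finset.card

/-- `F` is a facet (maximal face) of `K`. -/
def IsFacet (K : SComplex V) (F : Finset V) : Prop :=
  F ∈ K.faces ∧ ∀ G ∈ K.faces, F ⊆ G → F = G

/-- `K` is pure: all facets have the maximal cardinality `K.rank`. -/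
def Pure (K : SComplex V) : Prop := ∀ F : Finset V, K.IsFacet F → F.card = K.rank

/-- The link `lk_K(T) = {G ∈ K | T ∪ G ∈ K, T ∩ G = ∅}`. -/
def link (K : SComplex V) (T : Finset V) : SComplex V where
  faces := K.faces.filter fun G => Disjoint T G ∧ T ∪ G ∈ K.faces
  down_closed := by
    intro s t hs hts
    simp only [Finset.mem_filter] at hs ⊢
    exact ⟨K.down_closed hs.1 hts, hs.2.1.mono_right hts,
      K.down_closed hs.2.2 (Finset.union_subset_union_right hts)⟩

/-- The anti-star `ast_K(T) = {G ∈ K | T ∩ G = ∅}`. -/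
def antistar (K : SComplex V) (T : Finset V) : SComplex V where
  faces := K.faces.filter fun G => Disjoint T G
  down_closed := by
    intro s t hs hts
    simp only [Finset.mem_filter] at hs ⊢
    exact ⟨K.down_closed hs.1 hts, hs.2.mono_right hts⟩

/-- The induced subcomplex of `K` on a set `W` of vertices. -/
def restrict (K : SComplex V) (W : Finset V) : SComplex V where
  faces := K.faces.filter fun G => G ⊆ W
  down_closed := by
    intro s t hs hts
    simp only [Finset.mem_filter] at hs ⊢
    exact ⟨K.down_closed hs.1 hts, hts.trans hs.2⟩

/-- The subcomplex of faces of cardinality at most `m`; as cardinality = dimension + 1, this is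
the `(m-1)`-skeleton `Δ^{(m-1)}`. -/
def skelCard (K : SComplex V) (m : ℕ) : SComplex V where
  faces := K.faces.filter fun G => G.card ≤ m
  down_closed := by
    intro s t hs hts
    simp only [Finset.mem_filter] at hs ⊢
    exact ⟨K.down_closed hs.1 hts, le_trans (Finset.card_le_card hts) hs.2⟩

/-- `K.trunc j` is `[Δ]_{>j}`, the order complex of the poset of faces of `K` of cardinality
(equivalently, of height in the face poset) `> j`: its faces are the chains of such faces.
For `j = 0` this is the barycentric subdivision of `K`. -/
def trunc (K : SComplex V) (j : ℕ) : SComplex (Finset V) where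
  faces := K.faces.powerset.filter fun C =>
    (∀ s ∈ C, j < s.card) ∧ ∀ s ∈ C, ∀ t ∈ C, s ⊆ t ∨ t ⊆ s
  down_closed := by
    intro s t hs hts
    simp only [Finset.mem_powerset, Finset.mem_filter] at hs ⊢
    exact ⟨hts.trans hs.1, fun a ha => hs.2.1 a (hts ha),
      fun a ha b hb => hs.2.2 a (hts ha) b (hts hb)⟩

/-- `Δ_A`: the complex obtained from `K` by deleting all faces containing a member of `A`. -/
def deleteAbove (K : SComplex V) (A : Finset (Finset V)) : SComplex V where
  faces := K.faces.filter fun s => ∀ τ ∈ A, ¬ τ ⊆ s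
  down_closed := by
    intro s t hs hts
    simp only [Finset.mem_filter] at hs ⊢
    exact ⟨K.down_closed hs.1 hts, fun τ hτ hsub => hs.2 τ hτ (hsub.trans hts)⟩

/-- The number of faces of `K` of cardinality `i`, i.e. the face number `f_{i-1}(K)`. -/
def faceCount (K : SComplex V) (i : ℕ) : ℕ := (K.faces.filter fun s => s.card = i).card

/-- The Euler characteristic `χ(K) = Σ_{i ≥ 0} (-1)^i f_i(K)`. -/
def eulerChar (K : SComplex V) : ℤ :=
  ∑ s ∈ K.faces.filter (fun s => s ≠ ∅), (-1 : ℤ) ^ (s.card - 1)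

/-- The reduced Euler characteristic `χ̃(K) = χ(K) - 1`. -/
def reducedEulerChar (K : SComplex V) : ℤ := eulerChar K - 1

end SComplex

/-! ### Simplicial homology with coefficients in a field `k` -/

/-- An arbitrary linear order on a finite type. -/
noncomputable def arbOrder (V : Type) [Fintype V] : LinearOrder V :=
  LinearOrder.lift' (Fintype.equivFin V) (Equiv.injective _)

namespace SComplex

variable {V : Type} [DecidableEq V]

/-- The faces of `K` of cardinality `n`, as a type. -/
def Faces (K : SComplex V) (n : ℕ) : Type :=
  {s : Finset V // s ∈ K.faces ∧ s.card = n}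

/-- The space of reduced simplicial `n`-chains of `K`: formal `k`-linear combinations of the
faces of cardinality `n` (such a face has dimension `n - 1`; the empty face sits in degree `0`,
which produces *reduced* homology). -/
abbrev ChainsOf (k : Type) [Field k] (K : SComplex V) (n : ℕ) : Type := Faces K n →₀ k

variable (k : Type) [Field k] [Fintype V]

/-- The simplicial boundary map, with signs determined by an arbitrary but fixed linear order
on the vertices. -/
noncomputable def bd (K : SComplex V) (n : ℕ) :
    ChainsOf k K n →ₗ[k] ChainsOf k K (n - 1) :=
  letI : LinearOrder V := arbOrder V
  Finsupp.lsum k fun s : Faces K n =>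
    LinearMap.toSpanSingleton k (ChainsOf k K (n - 1))
      (∑ x ∈ s.1.attach,
        ((-1 : k) ^ (s.1.filter (fun y => y < x.1)).card) •
          Finsupp.single
            (⟨s.1.erase x.1,
              K.down_closed s.2.1 (Finset.erase_subset _ _),
              by rw [Finset.card_erase_of_mem x.2, s.2.2]⟩ : Faces K (n - 1))
            (1 : k))

/-- `HVanish k K i` says that the reduced simplicial homology `H̃_{i-1}(K; k)` vanishes.
Note the indexing convention: the index `i` is the *cardinality* of the relevant faces, so this
is reduced homology in topological degree `i - 1`; e.g. `HVanish k K 1` says `H̃₀(K; k) = 0`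
(`K` is connected and nonempty) and `HVanish k K 0` says `H̃₋₁(K; k) = 0` (`K` has a face).
Since the cycles in degree `i - 1` are `ker ∂ᵢ` and the boundaries are `im ∂ᵢ₊₁`, and the
boundaries are always contained in the cycles, vanishing of homology says exactly that every
cycle is a boundary. -/
def HVanish (K : SComplex V) (i : ℕ) : Prop :=
  LinearMap.ker (bd k K i) ≤ LinearMap.range (bd k K (i + 1))

/-- `redHomologyRank k K i` is the dimension `dim_k H̃_{i-1}(K; k)` of the reduced simplicial
homology of `K` in topological degree `i - 1` (cardinality index `i`), namely the dimension of
the cycles `ker ∂ᵢ` modulo the boundaries `im ∂ᵢ₊₁`. -/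
noncomputable def redHomologyRank (K : SComplex V) (i : ℕ) : ℕ :=
  Module.finrank k ↥(LinearMap.ker (bd k K i)) -
    Module.finrank k ↥(LinearMap.range (bd k K (i + 1)) ⊓ LinearMap.ker (bd k K i))

end SComplex

/-! ### Depth, Serre conditions, and Stanley–Reisner rings -/

/-- The length of a longest regular sequence on `R` contained in the ideal `I`
(the `I`-depth of `R`). -/
noncomputable def depthIn (R : Type) [CommRing R] (I : Ideal R) : ℕ :=
  sSup {n : ℕ | ∃ rs : List R, rs.length = n ∧ (∀ r ∈ rs, r ∈ I) ∧
    RingTheory.Sequence.IsRegular R rs}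

/-- Serre's condition `(S_ℓ)` for a commutative ring:
`depth R_p ≥ min {ℓ, dim R_p}` for every prime `p`. -/
def SerreCondS (ℓ : ℕ) (R : Type) [CommRing R] : Prop :=
  ∀ (p : Ideal R) (hp : p.IsPrime),
    haveI := hp
    min ((ℓ : ℕ∞) : WithBot ℕ∞) (ringKrullDim (Localization.AtPrime p)) ≤
      ((depthIn (Localization.AtPrime p)
        (IsLocalRing.maximalIdeal (Localization.AtPrime p)) : ℕ∞) : WithBot ℕ∞)

namespace SComplex

variable {V : Type} [DecidableEq V] (k : Type) [Field k]

/-- The Stanley–Reisner ideal of `K`: generated by the squarefree monomials supported on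
non-faces. -/
noncomputable def srIdeal (K : SComplex V) : Ideal (MvPolynomial V k) :=
  Ideal.span ((fun s : Finset V => ∏ v ∈ s, MvPolynomial.X v) '' {s : Finset V | s ∉ K.faces})

/-- The Stanley–Reisner ring `k[Δ]`. -/
noncomputable abbrev SRRing (K : SComplex V) : Type := MvPolynomial V k ⧸ srIdeal k K

/-- `depth k[Δ]`: the depth of the Stanley–Reisner ring with respect to its irrelevant
(graded maximal) ideal. -/
noncomputable def srDepth (K : SComplex V) : ℕ :=
  depthIn (SRRing k K)
    (Ideal.span (Set.range fun v : V => Ideal.Quotient.mk (srIdeal k K) (MvPolynomial.X v)))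

/-- `k[Δ]` satisfies Serre's condition `(S_ℓ)`. -/
def SerreS (ℓ : ℕ) (K : SComplex V) : Prop := SerreCondS ℓ (SRRing k K)

end SComplex

/-! ### Order complexes of finite posets -/

/-- The order complex `O(P)` of a finite poset: its faces are the chains of `P`. -/
def orderComplex (P : Type) [DecidableEq P] [Fintype P] [PartialOrder P]
    [∀ a b : P, Decidable (a ≤ b)] : SComplex P where
  faces := Finset.univ.filter fun C : Finset P => ∀ a ∈ C, ∀ b ∈ C, a ≤ b ∨ b ≤ a
  down_closed := by
    intro s t hs hts
    simp only [Finset.mem_filter, Finset.mem_univ, true_and] at hs ⊢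
    exact fun a ha b hb => hs a (hts ha) b (hts hb)

/-- The height of an element of a finite poset: the maximal cardinality of a chain with top
element `p` (so minimal elements have height `1`). -/
def pheight {P : Type} [DecidableEq P] [Fintype P] [PartialOrder P]
    [∀ a b : P, Decidable (a ≤ b)] (p : P) : ℕ :=
  Finset.sup (Finset.univ.filter fun C : Finset P =>
    p ∈ C ∧ (∀ a ∈ C, a ≤ p) ∧ ∀ a ∈ C, ∀ b ∈ C, a ≤ b ∨ b ≤ a) Finset.card

/-- The height `ht P` of a finite poset: the maximal cardinality of a chain. -/
def pheightMax (P : Type) [DecidableEq P] [Fintype P] [PartialOrder P]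
    [∀ a b : P, Decidable (a ≤ b)] : ℕ :=
  Finset.univ.sup (pheight (P := P))

/-- `O(P_{>j})`: the full subcomplex of the order complex on the elements of height `> j`. -/
def ocAbove (P : Type) [DecidableEq P] [Fintype P] [PartialOrder P]
    [∀ a b : P, Decidable (a ≤ b)] (j : ℕ) : SComplex P :=
  (orderComplex P).restrict (Finset.univ.filter fun p => j < pheight p)

/-- The face poset `F(Δ)` of a simplicial complex: the nonempty faces, ordered by inclusion. -/
abbrev SComplex.FacePoset {V : Type} [DecidableEq V] (K : SComplex V) : Type :=
  {s : Finset V // s ∈ K.faces ∧ s ≠ ∅}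

instance {V : Type} [DecidableEq V] (K : SComplex V) :
    ∀ a b : K.FacePoset, Decidable (a ≤ b) := fun a b =>
  decidable_of_iff (a.1 ≤ b.1) Subtype.coe_le_coe

/-!
The Koszul complex on the variables detects depth: `depth k[Δ] ≥ t` exactly when the Koszul
cohomology of `k[Δ]` vanishes in degrees below `t`. That cohomology is multigraded; in a
multidegree with a positive entry the Koszul cochains are those of a cone, and in the other
multidegrees they compute the reduced cohomology of the deletions `ast_Δ(N)`, which gives
Hochster's formula.

For an independent set `J`, a face meets `J` in at most one vertex, so the cochains of `Δ` are
assembled from those of `ast_Δ(J)` and of the links of the `b ∈ J`. The resulting exact sequence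
`H̃_i(Δ) → ⨁_{b ∈ J} H̃_{i-1}(lk_Δ(b)) → H̃_{i-1}(ast_Δ(J)) → H̃_{i-1}(Δ)`
is used three times. For `J = {b}` it turns the vanishing condition on deletions into Reisner's
condition on links. For general `J` it shows that passing to `ast_Δ(J)` lowers the depth by at
most one, and, applied inside `lk_Δ(T')`, that a nonzero class of `lk_Δ(T' ∪ {b})` survives in
`lk_{ast_Δ(J)}(T')`, so that the depth does drop.
-/

namespace Koszul

variable {V : Type} [Fintype V]

/-- The incidence sign of the vertex `v` in `S`, for the order on the vertices fixed by
`arbOrder`: the parity of the number of elements of `S` below `v`. -/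
noncomputable def sgn (v : V) (S : Finset V) : ℤˣ :=
  letI : LinearOrder V := arbOrder V
  (-1) ^ #{y ∈ S | y < v}

theorem sgn_smul_sgn_smul {M : Type*} [AddCommGroup M] (v : V) (S : Finset V) (m : M) :
    sgn v S • sgn v S • m = m := by
  rw [smul_smul, Int.units_mul_self, one_smul]

theorem sgn_singleton_swap {u v : V} (h : u ≠ v) : sgn v {u} = -sgn u {v} := by
  let _ : LinearOrder V := arbOrder V
  unfold sgn
  rcases lt_or_gt_of_ne h with h | h <;> simp [filter_singleton, h, h.not_gt]

variable [DecidableEq V]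

theorem sgn_union {N G : Finset V} (h : Disjoint N G) (v : V) :
    sgn v (N ∪ G) = sgn v N * sgn v G := by
  let _ : LinearOrder V := arbOrder V
  unfold sgn
  rw [← pow_add, filter_union, card_union_of_disjoint (disjoint_filter_filter h)]

theorem sgn_eq_mul_sgn_erase {S : Finset V} {u : V} (hu : u ∈ S) (v : V) :
    sgn v S = sgn v {u} * sgn v (S.erase u) := by
  rw [← sgn_union (by simp), ← insert_eq, insert_erase hu]

theorem sgn_mul_sgn_erase {S : Finset V} {u v : V} (hu : u ∈ S) (hv : v ∈ S) (h : u ≠ v) :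
    sgn u S * sgn v (S.erase u) = -(sgn v S * sgn u (S.erase v)) := by
  rw [sgn_eq_mul_sgn_erase hv u, sgn_eq_mul_sgn_erase hu v, sgn_singleton_swap h, mul_right_comm,
    neg_mul, neg_mul, neg_neg]

variable {R : Type*} [CommRing R] {M : Type*} [AddCommGroup M] [Module R M]

/-- The Koszul differential of the family `x`. A cochain of degree `i` is the restriction of
`φ : Finset V → M` to the sets of cardinality `i`. -/
noncomputable def d (x : V → R) (φ : Finset V → M) (S : Finset V) : M :=
  ∑ v ∈ S, sgn v S • x v • φ (S.erase v)

/-- Contraction of cochains with the vertex `b`. -/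
noncomputable def contract (b : V) (φ : Finset V → M) (G : Finset V) : M :=
  if b ∈ G then 0 else sgn b (insert b G) • φ (insert b G)

theorem contract_of_mem {b : V} {G : Finset V} (φ : Finset V → M) (hb : b ∈ G) :
    contract b φ G = 0 :=
  if_pos hb

theorem contract_of_notMem {b : V} {G : Finset V} (φ : Finset V → M) (hb : b ∉ G) :
    contract b φ G = sgn b (insert b G) • φ (insert b G) :=
  if_neg hb

@[simp]
theorem d_empty (x : V → R) (φ : Finset V → M) : d x φ ∅ = 0 :=
  sum_empty

theorem d_congr {x : V → R} {φ ψ : Finset V → M} {S : Finset V}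
    (h : ∀ v ∈ S, φ (S.erase v) = ψ (S.erase v)) : d x φ S = d x ψ S :=
  sum_congr rfl fun v hv => by rw [h v hv]

theorem d_eq_zero {x : V → R} {φ : Finset V → M} {S : Finset V}
    (h : ∀ v ∈ S, φ (S.erase v) = 0) : d x φ S = 0 :=
  sum_eq_zero fun v hv => by rw [h v hv, smul_zero, smul_zero]

theorem d_add (x : V → R) (φ ψ : Finset V → M) (S : Finset V) :
    d x (φ + ψ) S = d x φ S + d x ψ S := by
  simp only [d, Pi.add_apply, smul_add, sum_add_distrib]

theorem d_sub (x : V → R) (φ ψ : Finset V → M) (S : Finset V) :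
    d x (φ - ψ) S = d x φ S - d x ψ S := by
  simp only [d, Pi.sub_apply, smul_sub, sum_sub_distrib]

theorem d_smul (x : V → R) (r : R) (φ : Finset V → M) (S : Finset V) :
    d x (r • φ) S = r • d x φ S := by
  simp only [d, Pi.smul_apply, smul_sum, smul_comm r]

theorem map_d {N : Type*} [AddCommGroup N] [Module R N] (f : M →ₗ[R] N) (x : V → R)
    (φ : Finset V → M) (S : Finset V) : f (d x φ S) = d x (f ∘ φ) S := by
  simp only [d, map_sum, Function.comp_apply, Units.smul_def, map_zsmul, map_smul]

theorem d_insert (x : V → R) (φ : Finset V → M) {G : Finset V} {b : V} (hb : b ∉ G) :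
    d x φ (insert b G) = sgn b (insert b G) • (x b • φ G - d x (contract b φ) G) := by
  unfold d
  rw [sum_insert hb, erase_insert hb, smul_sub, sub_eq_add_neg, smul_sum, ← sum_neg_distrib]
  congr 1
  refine sum_congr rfl fun v hv => ?_
  have hvb : v ≠ b := ne_of_mem_of_not_mem hv hb
  have herase : (insert b G).erase v = insert b (G.erase v) := erase_insert_of_ne hvb.symm
  have hsign : sgn v (insert b G) * sgn b (insert b (G.erase v)) =
      -(sgn b (insert b G) * sgn v G) := by
    simpa only [herase, erase_insert hb] using
      sgn_mul_sgn_erase (mem_insert_of_mem hv) (mem_insert_self b G) hvb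
  rw [contract_of_notMem _ (mt mem_of_mem_erase hb), herase, smul_comm (x v), smul_smul, smul_smul,
    ← Units.neg_smul, ← neg_mul, ← hsign, mul_assoc, Int.units_mul_self, mul_one]

/-- Contraction is a homotopy from multiplication by `x b` to zero. -/
theorem d_contract_add_contract_d (x : V → R) (φ : Finset V → M) (b : V) (G : Finset V) :
    d x (contract b φ) G + contract b (d x φ) G = x b • φ G := by
  by_cases hb : b ∈ G
  · obtain ⟨H, hbH, rfl⟩ : ∃ H, b ∉ H ∧ insert b H = G :=
      ⟨G.erase b, notMem_erase b G, insert_erase hb⟩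
    have hcc : d x (contract b (contract b φ)) H = 0 := d_eq_zero fun v _ => by
      rw [contract_of_notMem _ (mt mem_of_mem_erase hbH), contract_of_mem _ (mem_insert_self _ _),
        smul_zero]
    rw [contract_of_mem _ hb, d_insert x _ hbH, hcc, contract_of_notMem _ hbH, sub_zero, add_zero,
      smul_comm (x b), sgn_smul_sgn_smul]
  · rw [contract_of_notMem _ hb, d_insert x φ hb, sgn_smul_sgn_smul, add_sub_cancel]

theorem d_d (x : V → R) (φ : Finset V → M) (S : Finset V) : d x (d x φ) S = 0 := by
  induction S using Finset.induction_on generalizing φ with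
  | empty => exact d_empty x _
  | insert b G hb ih =>
    have hcontract : contract b (d x φ) = x b • φ - d x (contract b φ) :=
      funext fun H => eq_sub_of_add_eq' (d_contract_add_contract_d x φ b H)
    rw [d_insert x _ hb, hcontract, d_sub, d_smul, ih, sub_zero, sub_self, smul_zero]

theorem smul_eq_d_contract {x : V → R} {φ : Finset V → M} {b : V} {S : Finset V}
    (h : b ∉ S → d x φ (insert b S) = 0) : x b • φ S = d x (contract b φ) S := by
  rw [← d_contract_add_contract_d x φ b S, add_eq_left]
  by_cases hb : b ∈ S
  · exact contract_of_mem _ hb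
  · rw [contract_of_notMem _ hb, h hb, smul_zero]

/-- Exactness in degree `i` of the Koszul cochains on the sets in `P`. This is the vanishing of a
cohomology module when `P` is a lower set, so that `d x` restricts to `P`. -/
def ExactAt (M : Type*) [AddCommGroup M] [Module R M] (x : V → R) (P : Set (Finset V))
    (i : ℕ) : Prop :=
  ∀ φ : Finset V → M, (∀ S ∈ P, #S = i + 1 → d x φ S = 0) →
    ∃ ψ : Finset V → M, ∀ S ∈ P, #S = i → φ S = d x ψ S

theorem ExactAt.empty (M : Type*) [AddCommGroup M] [Module R M] (x : V → R) (i : ℕ) :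
    ExactAt M x ∅ i :=
  fun _ _ => ⟨0, fun _ hS => hS.elim⟩

theorem ExactAt.of_cone (M : Type*) [AddCommGroup M] [Module R M] {x : V → R} {b : V}
    (hb : x b = 1) {P : Set (Finset V)} (hP : ∀ S ∈ P, insert b S ∈ P) (i : ℕ) :
    ExactAt M x P i :=
  fun φ hφ => ⟨contract b φ, fun S hS hi => by
    rw [← smul_eq_d_contract fun hbS => hφ _ (hP S hS) (by rw [card_insert_of_notMem hbS, hi]),
      hb, one_smul]⟩

theorem exactAt_quotient_iff {x : V → R} {P : Set (Finset V)} {i : ℕ} (N : Submodule R M) :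
    ExactAt (M ⧸ N) x P i ↔ ∀ Φ : Finset V → M, (∀ S ∈ P, #S = i + 1 → d x Φ S ∈ N) →
      ∃ Ψ : Finset V → M, ∀ S ∈ P, #S = i → Φ S - d x Ψ S ∈ N := by
  have hsurj : Function.Surjective fun Φ : Finset V → M => N.mkQ ∘ Φ :=
    N.mkQ_surjective.comp_left
  simp only [ExactAt, hsurj.forall, hsurj.exists, ← map_d, Function.comp_apply,
    Submodule.mkQ_apply, Submodule.Quotient.mk_eq_zero, Submodule.Quotient.eq]

theorem exactAt_algebraMap_iff {A : Type*} [CommRing A] [Algebra R A] [Module A M]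
    [IsScalarTower R A M] {x : V → R} {P : Set (Finset V)} {i : ℕ} :
    ExactAt M (fun v => algebraMap R A (x v)) P i ↔ ExactAt M x P i := by
  simp only [ExactAt, d, algebraMap_smul]

theorem exists_d_eq_smul {x : V → R} {P : Set (Finset V)} (hP : IsUpperSet P) {i : ℕ}
    {φ : Finset V → M} (hφ : ∀ S ∈ P, #S = i + 1 → d x φ S = 0) {a : R}
    (ha : a ∈ Ideal.span (Set.range x)) :
    ∃ ψ : Finset V → M, ∀ S ∈ P, #S = i → a • φ S = d x ψ S := by
  induction ha using Submodule.span_induction with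
  | mem a ha =>
    obtain ⟨b, rfl⟩ := ha
    exact ⟨contract b φ, fun S hS hi => smul_eq_d_contract fun hb =>
      hφ _ (hP (subset_insert b S) hS) (by rw [card_insert_of_notMem hb, hi])⟩
  | zero => exact ⟨0, fun S _ _ => by rw [zero_smul, d_eq_zero fun _ _ => rfl]⟩
  | add a c _ _ iha ihc =>
    obtain ⟨ψ, hψ⟩ := iha
    obtain ⟨χ, hχ⟩ := ihc
    exact ⟨ψ + χ, fun S hS hi => by rw [d_add, add_smul, hψ S hS hi, hχ S hS hi]⟩
  | smul r a _ iha =>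
    obtain ⟨ψ, hψ⟩ := iha
    exact ⟨r • ψ, fun S hS hi => by rw [d_smul, smul_assoc, hψ S hS hi]⟩

theorem exactAt_quotSMulTop_iff {x : V → R} {P : Set (Finset V)} {i : ℕ} (a : R) :
    ExactAt (QuotSMulTop a M) x P i ↔
      ∀ Φ : Finset V → M, (∀ S ∈ P, #S = i + 1 → ∃ m, a • m = d x Φ S) →
        ∃ Ψ : Finset V → M, ∀ S ∈ P, #S = i → ∃ m, a • m = Φ S - d x Ψ S := by
  simp only [exactAt_quotient_iff, Submodule.mem_smul_pointwise_iff_exists, Submodule.mem_top,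
    true_and]

theorem ExactAt.quotSMulTop {x : V → R} {P : Set (Finset V)} (hP : IsLowerSet P) {i : ℕ} {a : R}
    (ha : IsSMulRegular M a) (h : ExactAt M x P i) (h' : ExactAt M x P (i + 1)) :
    ExactAt (QuotSMulTop a M) x P i := by
  refine (exactAt_quotSMulTop_iff a).2 fun Φ hΦ => ?_
  choose! ψ hψ using hΦ
  obtain ⟨η, hη⟩ := h' ψ fun S hS hi => ha.right_eq_zero_of_smul <| by
    rw [← d_smul, ← d_d x Φ S]
    exact d_congr fun v hv => hψ _ (hP (erase_subset v S) hS) (by simp [card_erase_of_mem hv, hi])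
  obtain ⟨ζ, hζ⟩ := h (Φ - a • η) fun S hS hi => by
    rw [d_sub, d_smul, ← hη S hS hi, hψ S hS hi, sub_self]
  exact ⟨ζ, fun S hS hi => ⟨η S, by rw [← hζ S hS hi, Pi.sub_apply, Pi.smul_apply, sub_sub_cancel]⟩⟩

theorem ExactAt.zero_of_isSMulRegular {x : V → R} {a : R} (ha : IsSMulRegular M a)
    (hax : a ∈ Ideal.span (Set.range x)) : ExactAt M x Set.univ 0 := by
  intro φ hφ
  obtain ⟨ψ, hψ⟩ := exists_d_eq_smul isUpperSet_univ hφ hax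
  refine ⟨0, fun S hS hi => ?_⟩
  obtain rfl := card_eq_zero.1 hi
  rw [d_empty]
  exact ha.right_eq_zero_of_smul (by rw [hψ ∅ hS hi, d_empty])

theorem ExactAt.succ_of_quotSMulTop {x : V → R} {i : ℕ} {a : R} (ha : IsSMulRegular M a)
    (hax : a ∈ Ideal.span (Set.range x)) (h : ExactAt (QuotSMulTop a M) x Set.univ i) :
    ExactAt M x Set.univ (i + 1) := by
  intro φ hφ
  obtain ⟨ψ, hψ⟩ := exists_d_eq_smul isUpperSet_univ hφ hax
  obtain ⟨η, hη⟩ := (exactAt_quotSMulTop_iff a).1 h ψ fun S hS hi => ⟨φ S, hψ S hS hi⟩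
  choose! ζ hζ using hη
  refine ⟨ζ, fun S hS hi => ha ?_⟩
  calc a • φ S = d x (ψ - d x η) S := by rw [hψ S hS hi, d_sub, d_d, sub_zero]
    _ = d x (a • ζ) S := d_congr fun v hv =>
      (hζ _ (Set.mem_univ _) (by simp [card_erase_of_mem hv, hi])).symm
    _ = a • d x ζ S := d_smul x a ζ S

theorem ExactAt.exists_isSMulRegular [IsNoetherianRing R] [Module.Finite R M] {x : V → R}
    {P : Set (Finset V)} (hP : ∅ ∈ P) (h : ExactAt M x P 0) :
    ∃ a ∈ Ideal.span (Set.range x), IsSMulRegular M a := by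
  rw [← Ideal.annihilator_quotient (I := Ideal.span (Set.range x)),
    ← IsSMulRegular.subsingleton_linearMap_iff]
  refine subsingleton_of_forall_eq 0 fun f => ?_
  obtain ⟨ψ, hψ⟩ := h (fun _ => f 1) fun S _ _ => sum_eq_zero fun v _ => by
    have hv : x v • (1 : R ⧸ Ideal.span (Set.range x)) = 0 := by
      rw [Algebra.smul_def, mul_one]
      exact Ideal.Quotient.eq_zero_iff_mem.2 (Ideal.subset_span (Set.mem_range_self v))
    rw [← map_smul, hv, map_zero, smul_zero]
  refine LinearMap.ext fun r => ?_
  obtain ⟨r, rfl⟩ := Ideal.Quotient.mk_surjective r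
  rw [LinearMap.zero_apply, ← mul_one (Ideal.Quotient.mk _ r)]
  change f (r • 1) = 0
  rw [map_smul, hψ ∅ hP card_empty, d_empty, smul_zero]

open RingTheory.Sequence in
/-- Depth sensitivity of the Koszul complex. -/
theorem exists_isWeaklyRegular_iff [IsNoetherianRing R] (x : V → R) (t : ℕ) (M : Type*)
    [AddCommGroup M] [Module R M] [Module.Finite R M] :
    (∃ rs : List R, rs.length = t ∧ (∀ r ∈ rs, r ∈ Ideal.span (Set.range x)) ∧
      IsWeaklyRegular M rs) ↔ ∀ i < t, ExactAt M x Set.univ i := by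
  induction t generalizing M with
  | zero => exact ⟨fun _ i hi => (Nat.not_lt_zero i hi).elim, fun _ => ⟨[], by simp⟩⟩
  | succ t ih =>
    constructor
    · rintro ⟨_ | ⟨a, rs⟩, hlen, hmem, hreg⟩
      · simp at hlen
      · rw [isWeaklyRegular_cons_iff] at hreg
        have hquot := (ih _).1 ⟨rs, by simpa using hlen, fun r hr => hmem r (by simp [hr]), hreg.2⟩
        rintro (_ | i) hi
        · exact .zero_of_isSMulRegular hreg.1 (hmem a (by simp))
        · exact .succ_of_quotSMulTop hreg.1 (hmem a (by simp)) (hquot i (by lia))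
    · intro h
      obtain ⟨a, ha, hreg⟩ := (h 0 t.succ_pos).exists_isSMulRegular (Set.mem_univ ∅)
      obtain ⟨rs, hlen, hmem, hrs⟩ := (ih _).2 fun i hi =>
        .quotSMulTop isLowerSet_univ hreg (h i (by lia)) (h (i + 1) (by lia))
      exact ⟨a :: rs, by simpa using hlen, by simpa [ha] using hmem, .cons hreg hrs⟩

end Koszul

namespace SComplex

section Combinatorics

variable {V : Type} [DecidableEq V] {K : SComplex V} {S T J F G : Finset V} {b : V}

theorem ext {K L : SComplex V} (h : ∀ F, F ∈ K.faces ↔ F ∈ L.faces) : K = L := by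
  cases K
  cases L
  congr
  exact Finset.ext h

theorem mem_antistar : G ∈ (K.antistar S).faces ↔ Disjoint S G ∧ G ∈ K.faces := by
  rw [antistar, mem_filter, and_comm]

theorem mem_link : G ∈ (K.link T).faces ↔ Disjoint T G ∧ T ∪ G ∈ K.faces := by
  rw [link, mem_filter, and_iff_right_of_imp]
  exact fun h => K.down_closed h.2 subset_union_right

theorem mem_link_singleton : G ∈ (K.link {b}).faces ↔ b ∉ G ∧ insert b G ∈ K.faces := by
  rw [mem_link, disjoint_singleton_left, insert_eq]

theorem mem_faces_of_mem_link (hG : G ∈ (K.link T).faces) : G ∈ K.faces :=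
  filter_subset _ _ hG

@[simp]
theorem antistar_empty (K : SComplex V) : K.antistar ∅ = K :=
  ext fun G => by simp [mem_antistar]

@[simp]
theorem link_empty (K : SComplex V) : K.link ∅ = K :=
  ext fun G => by simp [mem_link]

theorem antistar_antistar (K : SComplex V) (S J : Finset V) :
    (K.antistar S).antistar J = K.antistar (J ∪ S) :=
  ext fun G => by simp only [mem_antistar, disjoint_union_left, and_assoc]

theorem link_link (K : SComplex V) (h : Disjoint S T) : (K.link S).link T = K.link (S ∪ T) :=
  ext fun G => by
    simp only [mem_link, disjoint_union_left, disjoint_union_right, union_assoc]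
    tauto

theorem link_link_singleton (K : SComplex V) (hb : b ∉ T) :
    (K.link T).link {b} = K.link (insert b T) := by
  rw [link_link K (disjoint_singleton_right.2 hb), union_comm, ← insert_eq]

theorem link_antistar_sdiff (K : SComplex V) (S T : Finset V) :
    (K.antistar (S \ T)).link T = (K.link T).antistar S :=
  ext fun G => by
    have h (hTG : Disjoint T G) : Disjoint (S \ T) (T ∪ G) ↔ Disjoint S G := by
      rw [disjoint_union_right, and_iff_right sdiff_disjoint, disjoint_sdiff_comm,
        sdiff_eq_self_of_disjoint hTG.symm]
    simp only [mem_link, mem_antistar]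
    tauto

/-- `J` is an independent set for `K`: no two distinct elements of `J` span an edge of `K`. -/
def IsIndependent (K : SComplex V) (J : Finset V) : Prop :=
  ∀ a ∈ J, ∀ b ∈ J, a ≠ b → ({a, b} : Finset V) ∉ K.faces

theorem isIndependent_singleton (K : SComplex V) (b : V) : K.IsIndependent {b} := by
  simp [IsIndependent]

theorem IsIndependent.link (hJ : K.IsIndependent J) (T : Finset V) :
    (K.link T).IsIndependent J :=
  fun a ha b hb hab h => hJ a ha b hb hab (mem_faces_of_mem_link h)

theorem IsIndependent.disjoint_of_mem_link (hJ : K.IsIndependent J) (hb : b ∈ J)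
    (hG : G ∈ (K.link {b}).faces) : Disjoint J G := by
  rw [mem_link_singleton] at hG
  refine disjoint_left.2 fun a ha haG => hJ a ha b hb (ne_of_mem_of_not_mem haG hG.1) ?_
  exact K.down_closed hG.2 (insert_subset (mem_insert_of_mem haG) (by simp))

end Combinatorics

end SComplex

namespace Koszul

open SComplex

variable {V : Type} [DecidableEq V] [Fintype V] {R : Type*} [CommRing R]
  {M : Type*} [AddCommGroup M] [Module R M] {K : SComplex V} {J : Finset V}

theorem exists_eq_and_contract_eq (J : Finset V) (φ : Finset V → M) (η : V → Finset V → M) :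
    ∃ Φ : Finset V → M, (∀ G, Disjoint J G → Φ G = φ G) ∧
      ∀ b ∈ J, ∀ G, Disjoint J G → contract b Φ G = η b G := by
  refine ⟨fun F => if Disjoint J F then φ F else ∑ b ∈ J ∩ F, sgn b F • η b (F.erase b),
    fun G hG => if_pos hG, fun b hb G hG => ?_⟩
  have hbG : b ∉ G := disjoint_left.1 hG hb
  have hinter : J ∩ insert b G = {b} := by
    rw [inter_insert_of_mem hb, disjoint_iff_inter_eq_empty.1 hG, insert_empty_eq]
  have hnd : ¬Disjoint J (insert b G) := not_disjoint_iff.2 ⟨b, hb, mem_insert_self b G⟩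
  rw [contract_of_notMem _ hbG, if_neg hnd, hinter, sum_singleton, erase_insert hbG,
    sgn_smul_sgn_smul]

theorem exists_cocycle_of_isIndependent (hJ : K.IsIndependent J) {i : ℕ} {φ : Finset V → M}
    {η : V → Finset V → M} (hφ : ∀ G ∈ (K.antistar J).faces, #G = i + 1 → d (1 : V → R) φ G = 0)
    (hη : ∀ b ∈ J, ∀ G ∈ (K.link {b}).faces, #G = i → φ G = d (1 : V → R) (η b) G) :
    ∃ Φ : Finset V → M, (∀ G, Disjoint J G → Φ G = φ G) ∧
      (∀ b ∈ J, ∀ G, Disjoint J G → contract b Φ G = η b G) ∧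
      ∀ F ∈ K.faces, #F = i + 1 → d (1 : V → R) Φ F = 0 := by
  obtain ⟨Φ, hΦ, hΦ'⟩ := exists_eq_and_contract_eq J φ η
  refine ⟨Φ, hΦ, hΦ', fun F hF hi => ?_⟩
  by_cases hd : Disjoint J F
  · rw [← hφ F (mem_antistar.2 ⟨hd, hF⟩) hi]
    exact d_congr fun v _ => hΦ _ (hd.mono_right (erase_subset v F))
  · obtain ⟨b, hb, hbF⟩ := not_disjoint_iff.1 hd
    obtain ⟨G, hbG, rfl⟩ : ∃ G, b ∉ G ∧ insert b G = F :=
      ⟨F.erase b, notMem_erase b F, insert_erase hbF⟩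
    have hG : G ∈ (K.link {b}).faces := mem_link_singleton.2 ⟨hbG, hF⟩
    have hJG : Disjoint J G := hJ.disjoint_of_mem_link hb hG
    have hcontract : d (1 : V → R) (contract b Φ) G = d (1 : V → R) (η b) G :=
      d_congr fun v _ => hΦ' b hb _ (hJG.mono_right (erase_subset v G))
    rw [d_insert _ _ hbG, hcontract, Pi.one_apply, one_smul, hΦ G hJG,
      hη b hb G hG (by simpa [hbG] using hi), sub_self, smul_zero]

theorem ExactAt.antistar (hJ : K.IsIndependent J) {i : ℕ}
    (h : ExactAt M (1 : V → R) K.faces i)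
    (hlink : ∀ b ∈ J, ExactAt M (1 : V → R) (K.link {b}).faces i) :
    ExactAt M (1 : V → R) (K.antistar J).faces i := by
  intro φ hφ
  have hη : ∀ b ∈ J, ∃ η : Finset V → M,
      ∀ G ∈ (K.link {b}).faces, #G = i → φ G = d (1 : V → R) η G := fun b hb =>
    hlink b hb φ fun G hG => hφ G <|
      mem_antistar.2 ⟨hJ.disjoint_of_mem_link hb hG, mem_faces_of_mem_link hG⟩
  choose! η hη using hη
  obtain ⟨Φ, hΦ, -, hcocycle⟩ := exists_cocycle_of_isIndependent hJ hφ hη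
  obtain ⟨ψ, hψ⟩ := h Φ hcocycle
  refine ⟨ψ, fun G hG hi => ?_⟩
  obtain ⟨hJG, hGK⟩ := mem_antistar.1 hG
  rw [← hψ G hGK hi, hΦ G hJG]

theorem ExactAt.link_singleton (hJ : K.IsIndependent J) {b : V} (hb : b ∈ J) {i : ℕ}
    (h : ExactAt M (1 : V → R) K.faces (i + 1))
    (hast : ExactAt M (1 : V → R) (K.antistar J).faces i) :
    ExactAt M (1 : V → R) (K.link {b}).faces i := by
  intro φ hφ
  obtain ⟨Φ, hΦ, hΦ', hcocycle⟩ := exists_cocycle_of_isIndependent (R := R) hJ (i := i + 1)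
    (φ := 0) (η := Pi.single b φ) (fun G _ _ => d_eq_zero fun _ _ => rfl) fun c _ G hG hi => by
      rcases eq_or_ne c b with rfl | hc
      · rw [Pi.single_eq_same, hφ G hG hi, Pi.zero_apply]
      · rw [Pi.single_eq_of_ne hc, d_eq_zero fun _ _ => rfl, Pi.zero_apply]
  obtain ⟨ψ, hψ⟩ := h Φ hcocycle
  obtain ⟨χ, hχ⟩ := hast ψ fun G hG hi => by
    obtain ⟨hJG, hGK⟩ := mem_antistar.1 hG
    rw [← hψ G hGK hi, hΦ G hJG, Pi.zero_apply]
  refine ⟨χ - contract b ψ, fun G hG hi => ?_⟩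
  have hJG : Disjoint J G := hJ.disjoint_of_mem_link hb hG
  obtain ⟨hbG, hbGK⟩ := mem_link_singleton.1 hG
  calc φ G = contract b Φ G := by rw [hΦ' b hb G hJG, Pi.single_eq_same]
    _ = contract b (d (1 : V → R) ψ) G := by
      rw [contract_of_notMem _ hbG, contract_of_notMem _ hbG, hψ _ hbGK (by simp [hbG, hi])]
    _ = ψ G - d (1 : V → R) (contract b ψ) G := by
      rw [eq_sub_iff_add_eq', d_contract_add_contract_d, Pi.one_apply, one_smul]
    _ = d (1 : V → R) (χ - contract b ψ) G := by
      rw [d_sub, hχ G (mem_antistar.2 ⟨hJG, mem_faces_of_mem_link hG⟩) hi]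

end Koszul

namespace SComplex

section Duality

open Koszul

variable {V : Type} [DecidableEq V] {k : Type} [Field k] {K : SComplex V} {n : ℕ}

/-- The functional on the chains of `K` in degree `n` with the values prescribed by a cochain. -/
noncomputable def toDual (k : Type) [Field k] (K : SComplex V) (n : ℕ) (φ : Finset V → k) :
    Module.Dual k (ChainsOf k K n) :=
  Finsupp.linearCombination k fun s : Faces K n => φ s.1

theorem toDual_single (φ : Finset V → k) (s : Faces K n) :
    toDual k K n φ (Finsupp.single s 1) = φ s.1 := by
  rw [toDual, Finsupp.linearCombination_single, one_smul]

theorem dual_ext {g h : Module.Dual k (ChainsOf k K n)}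
    (H : ∀ s : Faces K n, g (Finsupp.single s 1) = h (Finsupp.single s 1)) : g = h :=
  Finsupp.lhom_ext' fun s => LinearMap.ext_ring (H s)

theorem toDual_eq_iff {φ ψ : Finset V → k} :
    toDual k K n φ = toDual k K n ψ ↔ ∀ S ∈ K.faces, #S = n → φ S = ψ S := by
  refine ⟨fun h S hS hn => ?_, fun h => dual_ext fun s => ?_⟩
  · let s : Faces K n := ⟨S, hS, hn⟩
    calc φ S = toDual k K n φ (Finsupp.single s 1) := (toDual_single φ s).symm
      _ = toDual k K n ψ (Finsupp.single s 1) := by rw [h]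
      _ = ψ S := toDual_single ψ s
  · rw [toDual_single, toDual_single, h s.1 s.2.1 s.2.2]

theorem toDual_surjective : Function.Surjective (toDual k K n) := by
  intro g
  obtain ⟨φ, hφ⟩ := Subtype.val_injective.surjective_comp_right
    fun s : Faces K n => g (Finsupp.single s 1)
  exact ⟨φ, dual_ext fun s => (toDual_single φ s).trans (congrFun hφ s)⟩

variable [Fintype V]

theorem dualMap_bd_toDual (φ : Finset V → k) :
    (bd k K n).dualMap (toDual k K (n - 1) φ) = toDual k K n (d (1 : V → k) φ) := by
  refine dual_ext fun s => ?_
  rw [toDual_single, LinearMap.dualMap_apply, bd, Finsupp.lsum_single,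
    LinearMap.toSpanSingleton_apply, one_smul, d, ← sum_attach s.1]
  refine (map_sum _ _ _).trans (sum_congr rfl fun v _ => ?_)
  refine (map_smul _ _ _).trans ((congrArg _ (toDual_single φ _)).trans ?_)
  rw [Pi.one_apply, one_smul, sgn, Units.smul_def, zsmul_eq_mul, smul_eq_mul]
  push_cast
  rfl

theorem hVanish_iff_exactAt {i : ℕ} : HVanish k K i ↔ ExactAt k (1 : V → k) K.faces i := by
  have hdual : HVanish k K i ↔
      LinearMap.ker (bd k K (i + 1)).dualMap ≤ LinearMap.range (bd k K i).dualMap := by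
    rw [HVanish, LinearMap.ker_dualMap_eq_dualAnnihilator_range,
      LinearMap.range_dualMap_eq_dualAnnihilator_ker]
    exact Subspace.dualAnnihilator_le_dualAnnihilator_iff.symm
  have hker (φ : Finset V → k) : (bd k K (i + 1)).dualMap (toDual k K i φ) = 0 ↔
      ∀ S ∈ K.faces, #S = i + 1 → d (1 : V → k) φ S = 0 := by
    have hzero : toDual k K (i + 1) 0 = 0 := dual_ext fun s => toDual_single 0 s
    rw [← hzero, ← toDual_eq_iff]
    exact Eq.congr_left (dualMap_bd_toDual φ)
  have hrange (φ : Finset V → k) : toDual k K i φ ∈ LinearMap.range (bd k K i).dualMap ↔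
      ∃ ψ : Finset V → k, ∀ S ∈ K.faces, #S = i → φ S = d (1 : V → k) ψ S := by
    simp only [LinearMap.mem_range, toDual_surjective.exists, dualMap_bd_toDual, toDual_eq_iff,
      eq_comm]
  rw [hdual, SetLike.le_def, toDual_surjective.forall]
  exact forall_congr' fun φ => imp_congr (hker φ) (hrange φ)

end Duality

section LinksAndDeletions

open Koszul

variable {V : Type} [DecidableEq V] [Fintype V] {k : Type} [Field k] {K : SComplex V}
  {J S T : Finset V} {t : ℕ}

theorem HVanish.of_faces_eq_empty (h : K.faces = ∅) (i : ℕ) : HVanish k K i := by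
  rw [hVanish_iff_exactAt, h, coe_empty]
  exact .empty k 1 i

theorem HVanish.link_of_notMem (hT : T ∉ K.faces) (i : ℕ) : HVanish k (K.link T) i :=
  .of_faces_eq_empty (eq_empty_of_forall_notMem fun _ hG =>
    hT (K.down_closed (mem_link.1 hG).2 subset_union_left)) i

theorem HVanish.antistar (hJ : K.IsIndependent J) {i : ℕ} (h : HVanish k K i)
    (hlink : ∀ b ∈ J, HVanish k (K.link {b}) i) : HVanish k (K.antistar J) i := by
  simp only [hVanish_iff_exactAt] at *
  exact ExactAt.antistar hJ h hlink

theorem HVanish.link_singleton (hJ : K.IsIndependent J) {b : V} (hb : b ∈ J) {i : ℕ}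
    (h : HVanish k K (i + 1)) (hast : HVanish k (K.antistar J) i) :
    HVanish k (K.link {b}) i := by
  rw [hVanish_iff_exactAt] at *
  exact ExactAt.link_singleton hJ hb h hast

variable (k)

/-- The condition of Reisner's criterion for `depth k[Δ] ≥ t`: vanishing of the reduced homology
of links in low degrees. The sets `T` are not required to be faces, since otherwise the link has
no faces at all and its homology vanishes. -/
def LinksVanish (K : SComplex V) (t : ℕ) : Prop :=
  ∀ T i, i + #T < t → HVanish k (K.link T) i

/-- The condition of Hochster's formula for `depth k[Δ] ≥ t`: vanishing of the reduced homology
of deletions, that is, of induced subcomplexes, in low degrees. -/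
def DeletionsVanish (K : SComplex V) (t : ℕ) : Prop :=
  ∀ S i, i + #S < t → HVanish k (K.antistar S) i

variable {k}

theorem LinksVanish.mono {s : ℕ} (h : LinksVanish k K t) (hst : s ≤ t) : LinksVanish k K s :=
  fun T i hi => h T i (hi.trans_le hst)

theorem LinksVanish.antistar (h : LinksVanish k K t) (hJ : K.IsIndependent J) :
    LinksVanish k (K.antistar J) (t - 1) := by
  intro T i hi
  by_cases hJT : Disjoint J T
  · rw [← sdiff_eq_self_of_disjoint hJT, link_antistar_sdiff]
    refine .antistar (hJ.link T) (h T i (by lia)) fun b hb => ?_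
    have hbT : b ∉ T := disjoint_left.1 hJT hb
    rw [link_link_singleton K hbT]
    exact h _ i (by rw [card_insert_of_notMem hbT]; lia)
  · exact .link_of_notMem (fun hT => hJT (mem_antistar.1 hT).1) i

theorem DeletionsVanish.link_singleton (h : DeletionsVanish k K t) (b : V) :
    DeletionsVanish k (K.link {b}) (t - 1) := by
  intro S i hi
  rw [← link_antistar_sdiff]
  have hcard : #(S \ {b}) ≤ #S := card_le_card sdiff_subset
  refine .link_singleton (isIndependent_singleton _ b) (mem_singleton_self b)
    (h _ _ (by lia)) ?_
  rw [antistar_antistar, ← insert_eq]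
  exact h _ i (by have := card_insert_le b (S \ {b}); lia)

theorem linksVanish_iff_deletionsVanish : LinksVanish k K t ↔ DeletionsVanish k K t := by
  constructor
  · intro h S
    induction S using Finset.induction_on generalizing K t with
    | empty => simpa using h ∅
    | insert b S hb ih =>
      intro i hi
      rw [card_insert_of_notMem hb] at hi
      rw [insert_eq, union_comm, ← antistar_antistar]
      exact ih (h.antistar (isIndependent_singleton K b)) i (by lia)
  · intro h T
    induction T using Finset.induction_on generalizing K t with
    | empty => simpa using h ∅
    | insert b T hb ih =>
      intro i hi
      rw [card_insert_of_notMem hb] at hi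
      rw [insert_eq, ← link_link K (disjoint_singleton_left.2 hb)]
      exact ih (h.link_singleton b) i (by lia)

theorem IsFacet.not_hVanish_link {F : Finset V} (hF : K.IsFacet F) :
    ¬HVanish k (K.link F) 0 := by
  have hface {S : Finset V} (hS : S ∈ (K.link F).faces) : S = ∅ := by
    obtain ⟨hFS, hFSK⟩ := mem_link.1 hS
    exact (disjoint_self_iff_empty S).1 (hFS.mono_left (hF.2 _ hFSK subset_union_left ▸
      subset_union_right))
  have hempty : ∅ ∈ (K.link F).faces := mem_link.2 ⟨disjoint_empty_right F, by simpa using hF.1⟩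
  rw [hVanish_iff_exactAt]
  intro h
  obtain ⟨ψ, hψ⟩ := h 1 fun S hS hi => by simp [hface hS] at hi
  simpa using hψ ∅ hempty card_empty

theorem LinksVanish.le_card {F : Finset V} (h : LinksVanish k K t) (hF : K.IsFacet F) :
    t ≤ #F :=
  not_lt.1 fun hlt => hF.not_hVanish_link (h F 0 (by lia))

end LinksAndDeletions

section Multigrading

open MvPolynomial Koszul

section SquarefreeExponent

variable {V : Type}

/-- The exponent vector of the squarefree monomial supported on `G`. -/
noncomputable def sqfreeExp (G : Finset V) : V →₀ ℕ := ∑ v ∈ G, Finsupp.single v 1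

theorem support_sqfreeExp (G : Finset V) : (sqfreeExp G).support = G := by
  classical
  ext v
  simp [sqfreeExp, Finsupp.finsetSum_apply, Finsupp.single_apply]

theorem sqfreeExp_le_iff {G : Finset V} {a : V →₀ ℕ} : sqfreeExp G ≤ a ↔ G ⊆ a.support := by
  classical
  simp only [Finsupp.le_def, subset_iff, Finsupp.mem_support_iff, ← Nat.one_le_iff_ne_zero]
  refine forall_congr' fun v => ?_
  by_cases hv : v ∈ G <;> simp [sqfreeExp, Finsupp.finsetSum_apply, Finsupp.single_apply, hv]

variable [DecidableEq V]

theorem support_add_sqfreeExp (p : V →₀ ℕ) (G : Finset V) :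
    (p + sqfreeExp G).support = p.support ∪ G := by
  rw [Finsupp.support_add_eq_union, support_sqfreeExp]

theorem add_sqfreeExp_of_mem (p : V →₀ ℕ) {G : Finset V} {v : V} (hv : v ∈ G) :
    p + sqfreeExp G = Finsupp.single v 1 + (p + sqfreeExp (G.erase v)) := by
  rw [sqfreeExp, ← add_sum_erase G _ hv, add_left_comm, sqfreeExp]

theorem exists_multidegree (S : Finset V) (a : V →₀ ℕ) :
    ∃ N G : Finset V, ∃ p : V →₀ ℕ, Disjoint N G ∧ Disjoint N p.support ∧ N ∪ G = S ∧
      p + sqfreeExp G = a := by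
  refine ⟨S \ a.support, S ∩ a.support, a - sqfreeExp (S ∩ a.support),
    disjoint_sdiff_inter S a.support, ?_, sdiff_union_inter S a.support,
    tsub_add_cancel_of_le (sqfreeExp_le_iff.2 inter_subset_right)⟩
  exact disjoint_sdiff_self_left.mono_right (Finsupp.support_mono tsub_le_self)

end SquarefreeExponent

variable {V : Type} [DecidableEq V] {k : Type} [Field k] {K : SComplex V}

theorem mem_srIdeal_iff {f : MvPolynomial V k} :
    f ∈ srIdeal k K ↔ ∀ a : V →₀ ℕ, a.support ∈ K.faces → coeff a f = 0 := by
  have hspan : srIdeal k K =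
      Ideal.span ((fun a => monomial a (1 : k)) '' (sqfreeExp '' {s | s ∉ K.faces})) := by
    simp only [srIdeal, Set.image_image, sqfreeExp, monomial_sum_one, X]
  simp only [hspan, mem_ideal_span_monomial_image, Set.exists_mem_image, sqfreeExp_le_iff,
    Set.mem_ofPred_eq, mem_support_iff]
  refine forall_congr' fun a => ⟨fun h ha => ?_, fun h ha => ⟨a.support, mt h ha, subset_rfl⟩⟩
  by_contra h0
  obtain ⟨s, hs, hsa⟩ := h h0
  exact hs (K.down_closed ha hsa)

/-- The sets `G` whose basis elements span the part of the Koszul cochains of `k[Δ]` in the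
multidegree whose positive part is `p` and whose negative part is the indicator of `N`. -/
def multigradedPiece (K : SComplex V) (N : Finset V) (p : V →₀ ℕ) : Set (Finset V) :=
  {G | Disjoint N G ∧ p.support ∪ G ∈ K.faces}

theorem multigradedPiece_zero (N : Finset V) :
    K.multigradedPiece N 0 = (K.antistar N).faces := by
  ext G
  simp [multigradedPiece, mem_antistar]

variable [Fintype V]

/-- The sign comparing the Koszul differential on the sets `N ∪ G` with the one on the sets
`G`. -/
noncomputable def shuffleSign (N G : Finset V) : ℤˣ := ∏ v ∈ G, sgn v N

theorem shuffleSign_of_mem (N : Finset V) {G : Finset V} {v : V} (hv : v ∈ G) :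
    shuffleSign N G = sgn v N * shuffleSign N (G.erase v) :=
  (mul_prod_erase G (fun v => sgn v N) hv).symm

/-- The component of a polynomial Koszul cochain in the multidegree given by `N` and `p`, as in
`multigradedPiece`. -/
noncomputable def component (N : Finset V) (p : V →₀ ℕ) (Φ : Finset V → MvPolynomial V k)
    (G : Finset V) : k :=
  shuffleSign N G • coeff (p + sqfreeExp G) (Φ (N ∪ G))

theorem component_sub (N : Finset V) (p : V →₀ ℕ) (Φ Ψ : Finset V → MvPolynomial V k)
    (G : Finset V) : component N p (Φ - Ψ) G = component N p Φ G - component N p Ψ G := by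
  rw [component, Pi.sub_apply, coeff_sub, smul_sub, component, component]

theorem component_d {N G : Finset V} {p : V →₀ ℕ} (hG : Disjoint N G)
    (hp : Disjoint N p.support) (Φ : Finset V → MvPolynomial V k) :
    component N p (d (X : V → MvPolynomial V k) Φ) G = d (1 : V → k) (component N p Φ) G := by
  have hN : ∑ v ∈ N, coeff (p + sqfreeExp G)
      (sgn v (N ∪ G) • (X v : MvPolynomial V k) • Φ ((N ∪ G).erase v)) = 0 :=
    sum_eq_zero fun v hv => by
    have hv' : v ∉ (p + sqfreeExp G).support := by
      rw [support_add_sqfreeExp, mem_union, not_or]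
      exact ⟨disjoint_left.1 hp hv, disjoint_left.1 hG hv⟩
    rw [Units.smul_def, coeff_smul, smul_eq_mul, coeff_X_mul', if_neg hv', smul_zero]
  rw [component, d, coeff_sum, sum_union hG, hN, zero_add, smul_sum, d]
  refine sum_congr rfl fun v hv => ?_
  have herase : (N ∪ G).erase v = N ∪ G.erase v := by
    rw [erase_union_distrib, erase_eq_of_notMem (disjoint_right.1 hG hv)]
  have hsign : shuffleSign N G * sgn v (N ∪ G) = sgn v G * shuffleSign N (G.erase v) := by
    rw [shuffleSign_of_mem N hv, sgn_union hG, mul_right_comm, ← mul_assoc (sgn v N),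
      Int.units_mul_self, one_mul]
  rw [Units.smul_def (sgn v (N ∪ G)), coeff_smul, ← Units.smul_def, smul_smul, hsign, smul_eq_mul,
    herase, add_sqfreeExp_of_mem p hv, coeff_X_mul, Pi.one_apply, one_smul, component, smul_smul]

theorem forall_mem_srIdeal_iff {Φ : Finset V → MvPolynomial V k} {n : ℕ} :
    (∀ S, #S = n → Φ S ∈ srIdeal k K) ↔ ∀ N p, Disjoint N p.support →
      ∀ G ∈ K.multigradedPiece N p, #G + #N = n → component N p Φ G = 0 := by
  simp only [mem_srIdeal_iff]
  constructor
  · intro h N p _ G hG hn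
    rw [component, h (N ∪ G) (by rw [card_union_of_disjoint hG.1, add_comm, hn]) _
      (by rw [support_add_sqfreeExp]; exact hG.2), smul_zero]
  · intro h S hS a ha
    obtain ⟨N, G, p, hNG, hp, rfl, rfl⟩ := exists_multidegree S a
    rw [support_add_sqfreeExp] at ha
    rw [card_union_of_disjoint hNG, add_comm] at hS
    exact (smul_eq_zero_iff_eq _).1 (h N p hp G ⟨hNG, ha⟩ hS)

theorem finite_component_ne_zero (Φ : Finset V → MvPolynomial V k) :
    {p | ∃ N, component N p Φ ≠ 0}.Finite := by
  have hfin : (⋃ S, ⋃ G, {p | p + sqfreeExp G ∈ (Φ S).support}).Finite :=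
    Set.finite_iUnion fun S => Set.finite_iUnion fun G =>
      (Φ S).support.finite_toSet.preimage (add_left_injective (sqfreeExp G)).injOn
  refine hfin.subset ?_
  rintro p ⟨N, hN⟩
  obtain ⟨G, hG⟩ := Function.ne_iff.1 hN
  simp only [Set.mem_iUnion]
  exact ⟨N ∪ G, G, mem_support_iff.2 fun h0 => hG (by rw [component, h0, smul_zero]; rfl)⟩

theorem exists_coeff_eq {σ R : Type*} [CommSemiring R] {c : (σ →₀ ℕ) → R}
    (hc : c.support.Finite) : ∃ f : MvPolynomial σ R, ∀ a, coeff a f = c a := by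
  classical
  refine ⟨∑ a ∈ hc.toFinset, monomial a (c a), fun a => ?_⟩
  simpa [coeff_sum, coeff_monomial] using Eq.symm

theorem exists_component_eq {η : Finset V → (V →₀ ℕ) → Finset V → k}
    (hη : {p | ∃ N, η N p ≠ 0}.Finite) :
    ∃ Ψ : Finset V → MvPolynomial V k, ∀ N p, Disjoint N p.support → ∀ G, Disjoint N G →
      component N p Ψ G = η N p G := by
  let c (S : Finset V) (a : V →₀ ℕ) : k :=
    shuffleSign (S \ a.support) (S ∩ a.support) •
      η (S \ a.support) (a - sqfreeExp (S ∩ a.support)) (S ∩ a.support)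
  have hc (S : Finset V) : (c S).support.Finite := by
    refine (Set.finite_iUnion fun G => hη.image (· + sqfreeExp G)).subset fun a ha => ?_
    have hne : η (S \ a.support) (a - sqfreeExp (S ∩ a.support)) ≠ 0 := fun h0 =>
      ha (by simp only [c, h0, Pi.zero_apply, smul_zero])
    exact Set.mem_iUnion.2 ⟨S ∩ a.support, _, ⟨_, hne⟩,
      tsub_add_cancel_of_le (sqfreeExp_le_iff.2 inter_subset_right)⟩
  choose Ψ hΨ using fun S => exists_coeff_eq (hc S)
  refine ⟨Ψ, fun N p hp G hG => ?_⟩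
  have hsdiff : (N ∪ G) \ (p + sqfreeExp G).support = N := by
    rw [support_add_sqfreeExp, union_sdiff_distrib, sdiff_eq_empty_iff_subset.2 subset_union_right,
      union_empty, sdiff_eq_self_of_disjoint (disjoint_union_right.2 ⟨hp, hG⟩)]
  have hinter : (N ∪ G) ∩ (p + sqfreeExp G).support = G := by
    rw [support_add_sqfreeExp, union_inter_distrib_right, disjoint_iff_inter_eq_empty.1
      (disjoint_union_right.2 ⟨hp, hG⟩), empty_union, inter_eq_left.2 subset_union_right]
  simp only [component, hΨ, c, hsdiff, hinter, add_tsub_cancel_right, smul_smul,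
    Int.units_mul_self, one_smul]

theorem exactAt_srRing_iff {i : ℕ} :
    ExactAt (SRRing k K) (fun v => Ideal.Quotient.mk (srIdeal k K) (X v)) Set.univ i ↔
      ∀ Φ : Finset V → MvPolynomial V k,
        (∀ N p, Disjoint N p.support → ∀ G ∈ K.multigradedPiece N p, #G + #N = i + 1 →
          d (1 : V → k) (component N p Φ) G = 0) →
        ∃ Ψ : Finset V → MvPolynomial V k, ∀ N p, Disjoint N p.support →
          ∀ G ∈ K.multigradedPiece N p, #G + #N = i →
            component N p Φ G = d (1 : V → k) (component N p Ψ) G := by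
  refine exactAt_algebraMap_iff.trans ((exactAt_quotient_iff (srIdeal k K)).trans ?_)
  simp only [Set.mem_univ, true_imp_iff]
  refine forall_congr' fun Φ => imp_congr (forall_mem_srIdeal_iff.trans ?_)
    (exists_congr fun Ψ => (forall_mem_srIdeal_iff (Φ := Φ - d X Ψ)).trans ?_)
  all_goals refine forall₃_congr fun N p hp => forall₃_congr fun G hG _ => ?_
  · rw [component_d hG.1 hp]
  · rw [component_sub, component_d hG.1 hp, sub_eq_zero]

theorem exactAt_srRing_of_multigradedPiece {i : ℕ}
    (h : ∀ N p, Disjoint N p.support → ∀ j, j + #N = i →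
      ExactAt k (1 : V → k) (K.multigradedPiece N p) j) :
    ExactAt (SRRing k K) (fun v => Ideal.Quotient.mk (srIdeal k K) (X v)) Set.univ i := by
  refine exactAt_srRing_iff.2 fun Φ hΦ => ?_
  have hprim (N p) : ∃ η : Finset V → k, (component N p Φ = 0 → η = 0) ∧
      (Disjoint N p.support → ∀ G ∈ K.multigradedPiece N p, #G + #N = i →
        component N p Φ G = d (1 : V → k) η G) := by
    by_cases h0 : component N p Φ = 0 ∨ ¬Disjoint N p.support ∨ i < #N
    · refine ⟨0, fun _ => rfl, fun hp G _ hGi => ?_⟩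
      have hc : component N p Φ = 0 := by
        rcases h0 with h0 | h0 | h0
        · exact h0
        · exact absurd hp h0
        · lia
      rw [hc, d_eq_zero fun _ _ => rfl, Pi.zero_apply]
    · push Not at h0
      obtain ⟨hne, hp, hNi⟩ := h0
      obtain ⟨η, hη⟩ := h N p hp (i - #N) (by lia) _ fun G hG hGi => hΦ N p hp G hG (by lia)
      exact ⟨η, fun h0 => absurd h0 hne, fun _ G hG hGi => hη G hG (by lia)⟩
  choose η hη0 hη using hprim
  obtain ⟨Ψ, hΨ⟩ := exists_component_eq (η := η) <|
    (finite_component_ne_zero Φ).subset fun p ⟨N, hN⟩ => ⟨N, mt (hη0 N p) hN⟩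
  refine ⟨Ψ, fun N p hp G hG hGi => (hη N p hp G hG hGi).trans (d_congr fun v _ => ?_)⟩
  rw [hΨ N p hp _ (hG.1.mono_right (erase_subset v G))]

theorem exactAt_srRing_iff_multigradedPiece {i : ℕ} :
    ExactAt (SRRing k K) (fun v => Ideal.Quotient.mk (srIdeal k K) (X v)) Set.univ i ↔
      ∀ N p, Disjoint N p.support → ∀ j, j + #N = i →
        ExactAt k (1 : V → k) (K.multigradedPiece N p) j := by
  refine ⟨fun h N₀ p₀ hp₀ j hj φ hφ => ?_, exactAt_srRing_of_multigradedPiece⟩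
  have hfin : {p | ∃ N, (if N = N₀ ∧ p = p₀ then φ else 0) ≠ 0}.Finite :=
    (Set.finite_singleton p₀).subset fun p ⟨N, hN⟩ => (ne_eq _ _ ▸ ite_ne_right_iff.1 hN).1.2
  obtain ⟨Φ, hΦ⟩ := exists_component_eq hfin
  have hd {N p G} (hp : Disjoint N p.support) (hG : Disjoint N G) :
      d (1 : V → k) (component N p Φ) G = d 1 (if N = N₀ ∧ p = p₀ then φ else 0) G :=
    d_congr fun v _ => hΦ N p hp _ (hG.mono_right (erase_subset v G))
  obtain ⟨Ψ, hΨ⟩ := exactAt_srRing_iff.1 h Φ fun N p hp G hG hGi => by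
    rw [hd hp hG.1]
    split_ifs with hNp
    · obtain ⟨rfl, rfl⟩ := hNp
      exact hφ G hG (by lia)
    · exact d_eq_zero fun _ _ => rfl
  refine ⟨component N₀ p₀ Ψ, fun G hG hGj => ?_⟩
  rw [← hΨ N₀ p₀ hp₀ G hG (by lia), hΦ N₀ p₀ hp₀ G hG.1, if_pos ⟨rfl, rfl⟩]

theorem exactAt_multigradedPiece_of_ne_zero (N : Finset V) {p : V →₀ ℕ}
    (hp : Disjoint N p.support) (hp0 : p ≠ 0) (j : ℕ) :
    ExactAt k (1 : V → k) (K.multigradedPiece N p) j := by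
  obtain ⟨b, hb⟩ := Finsupp.support_nonempty_iff.2 hp0
  have hcone : ∀ G ∈ K.multigradedPiece N p, insert b G ∈ K.multigradedPiece N p := by
    rintro G ⟨hNG, hG⟩
    refine ⟨disjoint_insert_right.2 ⟨disjoint_right.1 hp hb, hNG⟩, ?_⟩
    rwa [union_insert, insert_eq_of_mem (mem_union_left G hb)]
  exact .of_cone k (Pi.one_apply b) hcone j

theorem exactAt_srRing_iff_hVanish_antistar {i : ℕ} :
    ExactAt (SRRing k K) (fun v => Ideal.Quotient.mk (srIdeal k K) (X v)) Set.univ i ↔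
      ∀ N j, j + #N = i → HVanish k (K.antistar N) j := by
  simp only [exactAt_srRing_iff_multigradedPiece, hVanish_iff_exactAt, ← multigradedPiece_zero]
  refine ⟨fun h N => h N 0 (by simp), fun h N p hp j hj => ?_⟩
  rcases eq_or_ne p 0 with rfl | hp0
  · exact h N j hj
  · exact exactAt_multigradedPiece_of_ne_zero N hp hp0 j

end Multigrading

section Depth

open Koszul MvPolynomial RingTheory.Sequence

variable {V : Type} [DecidableEq V] (k : Type) [Field k] {K : SComplex V} {t : ℕ}

theorem span_range_mk_X_ne_top (hK : ∅ ∈ K.faces) :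
    Ideal.span (Set.range fun v : V => Ideal.Quotient.mk (srIdeal k K) (X v)) ≠ ⊤ := by
  let ε : SRRing k K →+* k := Ideal.Quotient.lift (srIdeal k K) constantCoeff fun f hf =>
    mem_srIdeal_iff.1 hf 0 (by simpa using hK)
  refine ne_top_of_le_ne_top (RingHom.ker_ne_top ε) (Ideal.span_le.2 ?_)
  rintro _ ⟨v, rfl⟩
  exact (Ideal.Quotient.lift_mk _ _ _).trans (constantCoeff_X k v)

theorem isRegular_iff_isWeaklyRegular {R : Type*} [CommRing R] {I : Ideal R} (hI : I ≠ ⊤)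
    {rs : List R} (hrs : ∀ r ∈ rs, r ∈ I) : IsRegular R rs ↔ IsWeaklyRegular R rs := by
  rw [isRegular_iff, and_iff_left_iff_imp, smul_eq_mul, Ideal.mul_top]
  exact fun _ h => hI (top_le_iff.1 (h.trans_le (Ideal.span_le.2 hrs)))

theorem exists_isFacet (hK : ∅ ∈ K.faces) : ∃ F, K.IsFacet F := by
  obtain ⟨F, hF⟩ := K.faces.exists_maximal ⟨∅, hK⟩
  exact ⟨F, hF.prop, fun G hG hFG => hF.eq_of_le hG hFG⟩

variable [Fintype V]

theorem exists_isRegular_iff_linksVanish (hK : ∅ ∈ K.faces) :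
    (∃ rs : List (SRRing k K), rs.length = t ∧
      (∀ r ∈ rs, r ∈ Ideal.span
        (Set.range fun v : V => Ideal.Quotient.mk (srIdeal k K) (X v))) ∧
      IsRegular (SRRing k K) rs) ↔ LinksVanish k K t := by
  rw [linksVanish_iff_deletionsVanish]
  refine (exists_congr fun rs => and_congr_right fun _ => and_congr_right fun hrs =>
    isRegular_iff_isWeaklyRegular (span_range_mk_X_ne_top k hK) hrs).trans ?_
  rw [exists_isWeaklyRegular_iff]
  simp only [exactAt_srRing_iff_hVanish_antistar]
  exact ⟨fun h S i hi => h _ hi S i rfl, fun h i hi N j hj => h N j (hj ▸ hi)⟩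

theorem le_srDepth_iff (hK : ∅ ∈ K.faces) : t ≤ srDepth k K ↔ LinksVanish k K t := by
  have hset : srDepth k K = sSup {t | LinksVanish k K t} := by
    simp only [srDepth, depthIn, exists_isRegular_iff_linksVanish k hK]
  obtain ⟨F, hF⟩ := exists_isFacet hK
  have hbdd : BddAbove {t | LinksVanish k K t} := ⟨#F, fun t ht => ht.le_card hF⟩
  have hne : {t | LinksVanish k K t}.Nonempty := ⟨0, fun _ _ h => (Nat.not_lt_zero _ h).elim⟩
  rw [hset]
  exact ⟨fun ht => (Nat.sSup_mem hne hbdd).mono ht, fun h => le_csSup hbdd h⟩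

theorem exists_not_hVanish_link (hK : ∅ ∈ K.faces) :
    ∃ T ∈ K.faces, #T ≤ srDepth k K ∧ ¬HVanish k (K.link T) (srDepth k K - #T) := by
  have hnot : ¬LinksVanish k K (srDepth k K + 1) :=
    mt (le_srDepth_iff k hK).2 (Nat.not_succ_le_self _)
  simp only [LinksVanish, not_forall] at hnot
  obtain ⟨T, i, hi, hT⟩ := hnot
  have hi' : srDepth k K ≤ i + #T :=
    not_lt.1 fun hlt => hT ((le_srDepth_iff k hK).1 le_rfl T i hlt)
  obtain rfl : i = srDepth k K - #T := by lia
  exact ⟨T, by_contra fun hTK => hT (.link_of_notMem hTK _), by lia, hT⟩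

theorem card_lt_srDepth {T : Finset V} (hK : ∅ ∈ K.faces)
    (hT : ∀ S ∈ K.faces, ¬HVanish k (K.link S) (srDepth k K - #S) → #T < #S) :
    #T < srDepth k K := by
  obtain ⟨S, hS, hcard, hnz⟩ := exists_not_hVanish_link k hK
  exact (hT S hS hnz).trans_le hcard

omit [Fintype V] in
theorem srDepth_sub_one_le_srDepth_antistar [Finite V] {J : Finset V} (hK : ∅ ∈ K.faces)
    (hJ : K.IsIndependent J) : srDepth k K - 1 ≤ srDepth k (K.antistar J) := by
  cases nonempty_fintype V
  exact (le_srDepth_iff k (mem_antistar.2 ⟨disjoint_empty_right J, hK⟩)).2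
    (((le_srDepth_iff k hK).1 le_rfl).antistar hJ)

theorem not_hVanish_link_antistar {J T : Finset V} {b : V} {i : ℕ} (hJ : K.IsIndependent J)
    (hbJ : b ∈ J) (hbT : b ∉ T) (hT : HVanish k (K.link T) (i + 1))
    (hbT' : ¬HVanish k (K.link (insert b T)) i) :
    ¬HVanish k ((K.antistar J).link T) i := fun h => by
  have hmem : T ∈ (K.link {b}).faces := mem_link_singleton.2
    ⟨hbT, by_contra fun hmem => hbT' (.link_of_notMem hmem i)⟩
  rw [← sdiff_eq_self_of_disjoint (hJ.disjoint_of_mem_link hbJ hmem), link_antistar_sdiff] at h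
  rw [← link_link_singleton K hbT] at hbT'
  exact hbT' (.link_singleton (hJ.link T) hbJ hT h)

end Depth

end SComplex

theorem depth_drop_of_independent_general {V : Type} [DecidableEq V] [Fintype V] (k : Type)
    [Field k] (K : SComplex V) (ℓ : ℕ) (hdepth : SComplex.srDepth k K = ℓ)
    (J : Finset V) (hJ : K.IsIndependent J)
    (T' : Finset V) (b : V) (hbJ : b ∈ J) (hbT' : b ∉ T') (hcard : #T' < ℓ)
    (hlink : SComplex.HVanish k (K.link T') (ℓ - #T'))
    (hlink_insert : ¬SComplex.HVanish k (K.link (insert b T')) (ℓ - #T' - 1)) :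
    ¬SComplex.HVanish k ((K.antistar J).link T') (ℓ - #T' - 1) ∧
      SComplex.srDepth k (K.antistar J) = ℓ - 1 := by
  have hnz := SComplex.not_hVanish_link_antistar k hJ hbJ hbT'
    (by rwa [Nat.sub_add_cancel (by lia)]) hlink_insert
  have hT' : T' ∈ (K.antistar J).faces := by_contra fun h => hnz (.link_of_notMem h _)
  have hempty : ∅ ∈ (K.antistar J).faces := SComplex.down_closed _ hT' (empty_subset T')
  refine ⟨hnz, le_antisymm (Nat.le_sub_one_of_lt (not_le.1 fun hle => hnz ?_)) ?_⟩
  · exact (SComplex.le_srDepth_iff k hempty).1 hle T' _ (by lia)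
  · exact hdepth ▸
      SComplex.srDepth_sub_one_le_srDepth_antistar k (SComplex.mem_antistar.1 hempty).2 hJ

/-- Suppose `depth k[Δ] = ℓ` and `H̃_{ℓ-1}(Δ; k) = 0`.  Choose a face `T` of
minimal cardinality with `H̃_{ℓ-|T|-1}(lk_Δ(T); k) ≠ 0`.  If `J` is an independent set of
vertices and `T = T' ∪ {b}` with `b ∈ J`, then for `Δ̃ = ast_Δ(J)` one has
`H̃_{ℓ-|T'|-2}(lk_Δ̃(T'); k) ≠ 0`; in particular `depth k[Δ̃] = ℓ - 1`.
(Recall the indexing convention: `H̃_{i-1}` is `HVanish`/homology at cardinality index `i`, so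
`H̃_{ℓ-|T|-1}` has cardinality index `ℓ - |T|` and `H̃_{ℓ-|T'|-2}` has index `ℓ - |T'| - 1`.) -/
theorem depth_drop_of_independent {V : Type} [DecidableEq V] [Fintype V] (k : Type) [Field k]
    (K : SComplex V) (ℓ : ℕ)
    (hdepth : SComplex.srDepth k K = ℓ)
    (hvanish : SComplex.HVanish k K ℓ)
    (T : Finset V) (hT : T ∈ K.faces)
    (hTnz : ¬ SComplex.HVanish k (K.link T) (ℓ - T.card))
    (hTmin : ∀ T₂ ∈ K.faces,
      ¬ SComplex.HVanish k (K.link T₂) (ℓ - T₂.card) → T.card ≤ T₂.card)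
    (J : Finset V)
    (hJV : ∀ a ∈ J, ({a} : Finset V) ∈ K.faces)
    (hJindep : ∀ a ∈ J, ∀ b ∈ J, a ≠ b → ({a, b} : Finset V) ∉ K.faces)
    (T' : Finset V) (b : V) (hbJ : b ∈ J) (hbT' : b ∉ T') (hdecomp : T = insert b T') :
    ¬ SComplex.HVanish k ((K.antistar J).link T') (ℓ - T'.card - 1) ∧
      SComplex.srDepth k (K.antistar J) = ℓ - 1 := by
  subst hdepth hdecomp
  rw [card_insert_of_notMem hbT'] at hTnz hTmin
  exact depth_drop_of_independent_general k K _ rfl J hJindep T' b hbJ hbT'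
    (SComplex.card_lt_srDepth k (K.down_closed hT (empty_subset _)) hTmin)
    (by_contra fun h =>
      Nat.not_succ_le_self _ (hTmin T' (K.down_closed hT (subset_insert b T')) h))
    (by rwa [Nat.sub_sub])
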